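/- Let G be a finite group acting linearly on a finite dimensional k-vector space V, let S = T_k(V)/(R) with R ⊆ V⊗V a subspace closed under the action of G, and let G act on S by the induced graded automorphisms. Then the skew group algebra S⋊G is isomorphic, as a graded algebra, to T_{kG}(kG⊗V⊗kG)/(R ∪ R'), where elements of G have degree 0 and elements of V have degree 1, R' = span_k{ g⊗v⊗1 − 1⊗ᵍv⊗g : v ∈ V, g ∈ G } ⊆ kG⊗V⊗kG, and R is identified with a subspace of k⊗V⊗k⊗V⊗k ⊆ (kG⊗V⊗kG)⊗_{kG}(kG⊗V⊗kG). -/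

import Mathlib

open TensorProduct

noncomputable section

namespace DeformKoszul

variable (k G V : Type) [Field k] [Group G] [AddCommGroup V] [Module k V]

/-! ### Koszulity (Backelin's distributivity criterion) -/

/-- `Vpow n = V^{⊗(n+1)}`. -/
def Vpow : ℕ → ModuleCat k
  | 0 => ModuleCat.of k V
  | n+1 => ModuleCat.of k (V ⊗[k] (Vpow n))

variable (R : Submodule k (V ⊗[k] V))

/-- `Wsub m i` is the subspace `V^{⊗i} ⊗ R ⊗ V^{⊗(m-1-i)}` of `V^{⊗(m+1)}`
(junk value `⊥` for `i > m-1`). -/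
def Wsub : (m : ℕ) → ℕ → Submodule k (Vpow k V m)
  | 0, _ => ⊥
  | 1, 0 => R
  | 1, _+1 => ⊥
  | m+2, 0 =>
      Submodule.map (TensorProduct.assoc k V V (Vpow k V m)).toLinearMap
        (LinearMap.range (TensorProduct.map R.subtype (LinearMap.id (M := Vpow k V m))))
  | m+1, i+1 =>
      LinearMap.range (TensorProduct.map (LinearMap.id (M := V)) (Wsub m i).subtype)

/-- The quadratic algebra `S = T(V)/(R)` is **Koszul**.  We use Backelin's criterion:
`S` is Koszul iff for each `n` the subspaces `V^{⊗i} ⊗ R ⊗ V^{⊗j}` of `V^{⊗n}`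
generate a distributive lattice; for finite collections of subspaces of a vector space
distributivity is equivalent to the existence of a basis of `V^{⊗n}` from which each of
the subspaces can be spanned. -/
def IsKoszul : Prop :=
  ∀ m : ℕ, ∃ (ι : Type) (b : Module.Basis ι k (Vpow k V m)),
    ∀ i : ℕ, ∃ J : Set ι, Wsub k V R m i = Submodule.span k (⇑b '' J)

/-! ### The deformed algebra `H_{λ,α,β}` -/

/-- The free `k`-algebra on the vector space `kG ⊕ V`. -/
abbrev FreeAlg := TensorAlgebra k (MonoidAlgebra k G × V)

/-- The canonical embedding of the group algebra `kG` into the free algebra. -/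
def gIn : MonoidAlgebra k G →ₗ[k] FreeAlg k G V :=
  (TensorAlgebra.ι k).comp (LinearMap.inl k (MonoidAlgebra k G) V)

/-- The canonical embedding of `V` into the free algebra. -/
def vIn : V →ₗ[k] FreeAlg k G V :=
  (TensorAlgebra.ι k).comp (LinearMap.inr k (MonoidAlgebra k G) V)

/-- `V ⊗ V → FreeAlg`, `v ⊗ w ↦ v·w`. -/
def mulVV : V ⊗[k] V →ₗ[k] FreeAlg k G V :=
  (LinearMap.mul' k _).comp (TensorProduct.map (vIn k G V) (vIn k G V))

/-- `V ⊗ kG → FreeAlg`, `v ⊗ x ↦ v·x`. -/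
def embVG : V ⊗[k] MonoidAlgebra k G →ₗ[k] FreeAlg k G V :=
  (LinearMap.mul' k _).comp (TensorProduct.map (vIn k G V) (gIn k G V))

variable (ρ : Representation k G V)

/-- The defining relations of `H_{λ,α,β}` over the generating space `kG ⊕ V`:
`kG` is a subalgebra (with the same unit), the group-action relations
`g·v = (ᵍv)·g + λ(g ⊗ v)` deforming `R'` by `λ`, and the quadratic Koszul relations
`r = α(r) + β(r)` for `r ∈ R`. -/
inductive GRel (lam : MonoidAlgebra k G ⊗[k] V →ₗ[k] MonoidAlgebra k G)
    (α : R →ₗ[k] (V ⊗[k] MonoidAlgebra k G))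
    (β : R →ₗ[k] MonoidAlgebra k G) :
    FreeAlg k G V → FreeAlg k G V → Prop
  | unit : GRel lam α β (gIn k G V 1) 1
  | gmul (x y : MonoidAlgebra k G) :
      GRel lam α β (gIn k G V x * gIn k G V y) (gIn k G V (x * y))
  | act (g : G) (v : V) :
      GRel lam α β (gIn k G V (MonoidAlgebra.of k G g) * vIn k G V v)
        (vIn k G V (ρ g v) * gIn k G V (MonoidAlgebra.of k G g)
          + gIn k G V (lam (MonoidAlgebra.of k G g ⊗ₜ[k] v)))
  | quad (r : R) :
      GRel lam α β (mulVV k G V (r : V ⊗[k] V))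
        (embVG k G V (α r) + gIn k G V (β r))

variable (lam : MonoidAlgebra k G ⊗[k] V →ₗ[k] MonoidAlgebra k G)
    (α : R →ₗ[k] (V ⊗[k] MonoidAlgebra k G))
    (β : R →ₗ[k] MonoidAlgebra k G)

/-- The algebra `H_{λ,α,β}`.  For `lam = 0`, `α = 0`, `β = 0` this is (the presentation
of) the skew group algebra `S ⋊ G`, where `S = T(V)/(R)`. -/
abbrev HAlg := RingQuot (GRel k G V R ρ lam α β)

/-- The quotient map onto `H_{λ,α,β}`. -/
def toH : FreeAlg k G V →ₐ[k] HAlg k G V R ρ lam α β :=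
  RingQuot.mkAlgHom k (GRel k G V R ρ lam α β)

/-- Degree-`n` part of the free algebra: `kG` has degree 0 and `V` degree 1. -/
def grT : ℕ → Submodule k (FreeAlg k G V)
  | 0 => Subalgebra.toSubmodule (Algebra.adjoin k (Set.range (gIn k G V)))
  | n+1 => grT n * (LinearMap.range (vIn k G V) * grT 0)

/-- Filtration of the free algebra, `kG` in degree 0 and `V` in degree 1. -/
def filtT : ℕ → Submodule k (FreeAlg k G V)
  | 0 => grT k G V 0
  | n+1 => filtT n ⊔ grT k G V (n+1)

/-- The induced filtration on `H_{λ,α,β}`. -/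
def filtH (d : ℕ) : Submodule k (HAlg k G V R ρ lam α β) :=
  (filtT k G V d).map (toH k G V R ρ lam α β).toLinearMap

/-- `H_{λ,α,β}` is a **PBW deformation** of `S ⋊ G`:  the associated graded algebra is
`S ⋊ G`, equivalently (all filtered pieces being finite dimensional) each filtered
piece has the same dimension as the corresponding one of `S ⋊ G = H_{0,0,0}`. -/
def IsPBW : Prop :=
  ∀ d, Module.finrank k (filtH k G V R ρ lam α β d)
    = Module.finrank k (filtH k G V R ρ 0 0 0 d)

/-! ### The skew group algebra and auxiliary maps -/

/-- The skew group algebra `S ⋊ G`, presented as `H_{0,0,0}`. -/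
abbrev SkewA := HAlg k G V R ρ 0 0 0

/-- The image of `kG` in `S ⋊ G`. -/
def gA : MonoidAlgebra k G →ₗ[k] SkewA k G V R ρ :=
  (toH k G V R ρ 0 0 0).toLinearMap.comp (gIn k G V)

/-- The image of `V` in `S ⋊ G`. -/
def vA : V →ₗ[k] SkewA k G V R ρ :=
  (toH k G V R ρ 0 0 0).toLinearMap.comp (vIn k G V)

/-- `g`, as an element of the group algebra. -/
def ofg (g : G) : MonoidAlgebra k G := MonoidAlgebra.of k G g

/-- The twist map `σ : kG ⊗ V → V ⊗ kG`, `g ⊗ v ↦ ᵍv ⊗ g`. -/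
def sigma : MonoidAlgebra k G ⊗[k] V →ₗ[k] V ⊗[k] MonoidAlgebra k G :=
  TensorProduct.lift
    (((Finsupp.lift (V →ₗ[k] (V ⊗[k] MonoidAlgebra k G)) k G
      (fun g => ((TensorProduct.mk k V (MonoidAlgebra k G)).flip (MonoidAlgebra.of k G g)).comp
        (ρ g))).comp (MonoidAlgebra.coeffLinearEquiv k).toLinearMap :
      MonoidAlgebra k G →ₗ[k] (V →ₗ[k] (V ⊗[k] MonoidAlgebra k G))))

/-- `λ(g ⊗ -) : V → kG` for fixed `g`. -/
def lamMk (g : G) : V →ₗ[k] MonoidAlgebra k G :=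
  lam.comp ((TensorProduct.mk k (MonoidAlgebra k G) V) (MonoidAlgebra.of k G g))

variable (hR : ∀ (g : G) (x : V ⊗[k] V), x ∈ R → TensorProduct.map (ρ g) (ρ g) x ∈ R)

/-- The diagonal action of `g` on `R ⊆ V ⊗ V`. -/
def rActR (g : G) : R →ₗ[k] R :=
  (TensorProduct.map (ρ g) (ρ g)).restrict (fun x hx => hR g x hx)

/-- Multiplication `V ⊗ kG → S ⋊ G`. -/
def embVGA : V ⊗[k] MonoidAlgebra k G →ₗ[k] SkewA k G V R ρ :=
  (LinearMap.mul' k _).comp (TensorProduct.map (vA k G V R ρ) (gA k G V R ρ))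

/-- Multiplication `kG ⊗ V → S ⋊ G`. -/
def embGVA : MonoidAlgebra k G ⊗[k] V →ₗ[k] SkewA k G V R ρ :=
  (LinearMap.mul' k _).comp (TensorProduct.map (gA k G V R ρ) (vA k G V R ρ))

/-- Multiplication `(V ⊗ kG) ⊗ V → S ⋊ G`. -/
def embVGVA : (V ⊗[k] MonoidAlgebra k G) ⊗[k] V →ₗ[k] SkewA k G V R ρ :=
  (LinearMap.mul' k _).comp (TensorProduct.map (embVGA k G V R ρ) (vA k G V R ρ))

/-- Multiplication `V ⊗ (V ⊗ kG) → S ⋊ G`. -/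
def embVVGA : V ⊗[k] (V ⊗[k] MonoidAlgebra k G) →ₗ[k] SkewA k G V R ρ :=
  (LinearMap.mul' k _).comp (TensorProduct.map (vA k G V R ρ) (embVGA k G V R ρ))

/-- The inclusion `R ⊗ V → V ⊗ (V ⊗ V)`. -/
def inclRV : (R : Submodule k (V ⊗[k] V)) ⊗[k] V →ₗ[k] V ⊗[k] (V ⊗[k] V) :=
  (TensorProduct.assoc k V V V).toLinearMap.comp
    (TensorProduct.map R.subtype LinearMap.id)

/-- The inclusion `V ⊗ R → V ⊗ (V ⊗ V)`. -/
def inclVR : V ⊗[k] (R : Submodule k (V ⊗[k] V)) →ₗ[k] V ⊗[k] (V ⊗[k] V) :=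
  TensorProduct.map LinearMap.id R.subtype

/-- The inclusion `R ⊗ kG → V ⊗ (V ⊗ kG)`. -/
def inclRG : (R : Submodule k (V ⊗[k] V)) ⊗[k] MonoidAlgebra k G →ₗ[k]
    V ⊗[k] (V ⊗[k] MonoidAlgebra k G) :=
  (TensorProduct.assoc k V V (MonoidAlgebra k G)).toLinearMap.comp
    (TensorProduct.map R.subtype LinearMap.id)

/-- `((1 ⊗ σ)(α ⊗ 1) − 1 ⊗ α)(x)`, computed from the two presentations
`x₁ ∈ R ⊗ V` and `x₂ ∈ V ⊗ R` of an element `x ∈ (R ⊗ V) ∩ (V ⊗ R)`. -/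
def Theta (x₁ : (R : Submodule k (V ⊗[k] V)) ⊗[k] V)
    (x₂ : V ⊗[k] (R : Submodule k (V ⊗[k] V))) : V ⊗[k] (V ⊗[k] MonoidAlgebra k G) :=
  (TensorProduct.map LinearMap.id (sigma k G V ρ))
      ((TensorProduct.assoc k V (MonoidAlgebra k G) V)
        ((TensorProduct.map α LinearMap.id) x₁))
    - (TensorProduct.map LinearMap.id α) x₂

/-- The extension of `α` to a right `kG`-module map `R ⊗ kG → V ⊗ kG`. -/
def αext : (R : Submodule k (V ⊗[k] V)) ⊗[k] MonoidAlgebra k G →ₗ[k]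
    V ⊗[k] MonoidAlgebra k G :=
  (TensorProduct.map LinearMap.id (LinearMap.mul' k (MonoidAlgebra k G))).comp
    (((TensorProduct.assoc k V (MonoidAlgebra k G) (MonoidAlgebra k G)).toLinearMap).comp
      (TensorProduct.map α LinearMap.id))

/-- The extension of `β` to a right `kG`-module map `R ⊗ kG → kG`. -/
def βext : (R : Submodule k (V ⊗[k] V)) ⊗[k] MonoidAlgebra k G →ₗ[k] MonoidAlgebra k G :=
  (LinearMap.mul' k (MonoidAlgebra k G)).comp (TensorProduct.map β LinearMap.id)

/-- The `g`-component `α_g : R → V` of `α`. -/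
def αComp (g : G) : (R : Submodule k (V ⊗[k] V)) →ₗ[k] V :=
  ((TensorProduct.rid k V).toLinearMap.comp
    (TensorProduct.map LinearMap.id
      ((Finsupp.lapply g).comp (MonoidAlgebra.coeffLinearEquiv k).toLinearMap))).comp α

/-- `Σ_{g ∈ G} α_g ⊗ λ(g ⊗ −)`, as a map `R ⊗ V → S ⋊ G`. -/
def sumAlphaLam [Fintype G] : (R : Submodule k (V ⊗[k] V)) ⊗[k] V →ₗ[k] SkewA k G V R ρ :=
  ∑ g : G, (embVGA k G V R ρ).comp
    (TensorProduct.map (αComp k G V R α g) (lamMk k G V lam g))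

/-- The degree-`d` graded piece of `S ⋊ G = H_{0,0,0}`. -/
def grA (d : ℕ) : Submodule k (SkewA k G V R ρ) :=
  (grT k G V d).map (toH k G V R ρ 0 0 0).toLinearMap

/-! ### The presentation `T_{kG}(kG ⊗ V ⊗ kG)/(R ∪ R')` -/

/-- The `kG`-bimodule `kG ⊗ V ⊗ kG`. -/
abbrev MM := MonoidAlgebra k G ⊗[k] (V ⊗[k] MonoidAlgebra k G)

/-- The free `k`-algebra on `kG ⊕ (kG ⊗ V ⊗ kG)`; quotiented by the relations
`TRel` below (which make `kG` a subalgebra acting on both sides of `kG ⊗ V ⊗ kG` in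
the evident way) it realizes the tensor algebra `T_{kG}(kG ⊗ V ⊗ kG)` of the
`kG`-bimodule `kG ⊗ V ⊗ kG` over the (noncommutative) ring `kG`, together with the
further relations `R ∪ R'`. -/
abbrev Free2 := TensorAlgebra k (MonoidAlgebra k G × MM k G V)

/-- The embedding of `kG`. -/
def gIn2 : MonoidAlgebra k G →ₗ[k] Free2 k G V :=
  (TensorAlgebra.ι k).comp (LinearMap.inl k (MonoidAlgebra k G) (MM k G V))

/-- The embedding of `kG ⊗ V ⊗ kG`. -/
def mIn2 : MM k G V →ₗ[k] Free2 k G V :=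
  (TensorAlgebra.ι k).comp (LinearMap.inr k (MonoidAlgebra k G) (MM k G V))

/-- `V → kG ⊗ V ⊗ kG`, `v ↦ 1 ⊗ v ⊗ 1`. -/
def jV : V →ₗ[k] MM k G V :=
  ((TensorProduct.mk k (MonoidAlgebra k G) (V ⊗[k] MonoidAlgebra k G)) 1).comp
    ((TensorProduct.mk k V (MonoidAlgebra k G)).flip 1)

/-- `V ⊗ V → Free2`, `v ⊗ w ↦ (1⊗v⊗1)·(1⊗w⊗1)`; this is how `R` is identified with a
subspace of `(kG ⊗ V ⊗ kG) ⊗_{kG} (kG ⊗ V ⊗ kG)`. -/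
def mul2VV : V ⊗[k] V →ₗ[k] Free2 k G V :=
  (LinearMap.mul' k _).comp
    (TensorProduct.map ((mIn2 k G V).comp (jV k G V)) ((mIn2 k G V).comp (jV k G V)))

/-- The left action of `kG` on `kG ⊗ V ⊗ kG`. -/
def lactM (x : MonoidAlgebra k G) : MM k G V →ₗ[k] MM k G V :=
  TensorProduct.map (LinearMap.mulLeft k x) LinearMap.id

/-- The right action of `kG` on `kG ⊗ V ⊗ kG`. -/
def ractM (x : MonoidAlgebra k G) : MM k G V →ₗ[k] MM k G V :=
  TensorProduct.map LinearMap.id (TensorProduct.map LinearMap.id (LinearMap.mulRight k x))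

/-- Relations presenting `T_{kG}(kG ⊗ V ⊗ kG)/(R ∪ R')` as a quotient of the free
`k`-algebra on `kG ⊕ (kG ⊗ V ⊗ kG)`:  the first four families of relations present the
relative tensor algebra `T_{kG}(kG ⊗ V ⊗ kG)` over the ring `kG`, `quad` imposes `R`
and `skew` imposes `R' = span{g ⊗ v ⊗ 1 − 1 ⊗ ᵍv ⊗ g}`. -/
inductive TRel : Free2 k G V → Free2 k G V → Prop
  | unit : TRel (gIn2 k G V 1) 1
  | gmul (x y : MonoidAlgebra k G) :
      TRel (gIn2 k G V x * gIn2 k G V y) (gIn2 k G V (x * y))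
  | lact (x : MonoidAlgebra k G) (m : MM k G V) :
      TRel (gIn2 k G V x * mIn2 k G V m) (mIn2 k G V (lactM k G V x m))
  | ract (x : MonoidAlgebra k G) (m : MM k G V) :
      TRel (mIn2 k G V m * gIn2 k G V x) (mIn2 k G V (ractM k G V x m))
  | quad (r : R) : TRel (mul2VV k G V (r : V ⊗[k] V)) 0
  | skew (g : G) (v : V) :
      TRel (mIn2 k G V (MonoidAlgebra.of k G g ⊗ₜ[k] (v ⊗ₜ[k] 1)))
        (mIn2 k G V (1 ⊗ₜ[k] (ρ g v ⊗ₜ[k] MonoidAlgebra.of k G g)))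

/-- The algebra `T_{kG}(kG ⊗ V ⊗ kG)/(R ∪ R')`. -/
abbrev QT := RingQuot (TRel k G V R ρ)

/-- The quotient map. -/
def toQT : Free2 k G V →ₐ[k] QT k G V R ρ :=
  RingQuot.mkAlgHom k (TRel k G V R ρ)

/-- Degree-`n` part of `Free2`: `kG` has degree 0 and `kG ⊗ V ⊗ kG` degree 1. -/
def grT2 : ℕ → Submodule k (Free2 k G V)
  | 0 => Subalgebra.toSubmodule (Algebra.adjoin k (Set.range (gIn2 k G V)))
  | n+1 => grT2 n * (LinearMap.range (mIn2 k G V) * grT2 0)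

/-- The degree-`d` graded piece of `T_{kG}(kG ⊗ V ⊗ kG)/(R ∪ R')`. -/
def grQT (d : ℕ) : Submodule k (QT k G V R ρ) :=
  (grT2 k G V d).map (toQT k G V R ρ).toLinearMap

end DeformKoszul


namespace DeformKoszul

theorem toQT_eq {k G V : Type} [Field k] [Group G] [AddCommGroup V] [Module k V]
    {R : Submodule k (V ⊗[k] V)} {ρ : Representation k G V} {a b : Free2 k G V}
    (h : TRel k G V R ρ a b) : toQT k G V R ρ a = toQT k G V R ρ b :=
  RingQuot.mkAlgHom_rel k h

theorem toH_eq {k G V : Type} [Field k] [Group G] [AddCommGroup V] [Module k V]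
    {R : Submodule k (V ⊗[k] V)} {ρ : Representation k G V} {a b : FreeAlg k G V}
    (h : GRel k G V R ρ 0 0 0 a b) : toH k G V R ρ 0 0 0 a = toH k G V R ρ 0 0 0 b :=
  RingQuot.mkAlgHom_rel k h

section aux
variable (k G V : Type) [Field k] [Group G] [AddCommGroup V] [Module k V]
  (R : Submodule k (V ⊗[k] V)) (ρ : Representation k G V)

def gQ : MonoidAlgebra k G →ₗ[k] QT k G V R ρ :=
  (toQT k G V R ρ).toLinearMap.comp (gIn2 k G V)

def mQ : MM k G V →ₗ[k] QT k G V R ρ :=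
  (toQT k G V R ρ).toLinearMap.comp (mIn2 k G V)

def vQ : V →ₗ[k] QT k G V R ρ := (mQ k G V R ρ).comp (jV k G V)

theorem gQ_one : gQ k G V R ρ 1 = 1 := by
  simpa [gQ] using toQT_eq (R := R) (ρ := ρ) TRel.unit

theorem gQ_mul (x y) : gQ k G V R ρ x * gQ k G V R ρ y = gQ k G V R ρ (x * y) := by
  simpa [gQ] using toQT_eq (R := R) (ρ := ρ) (TRel.gmul x y)

theorem gQ_mQ (x m) : gQ k G V R ρ x * mQ k G V R ρ m = mQ k G V R ρ (lactM k G V x m) := by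
  simpa [gQ, mQ] using toQT_eq (R := R) (ρ := ρ) (TRel.lact x m)

theorem mQ_gQ (x m) : mQ k G V R ρ m * gQ k G V R ρ x = mQ k G V R ρ (ractM k G V x m) := by
  simpa [gQ, mQ] using toQT_eq (R := R) (ρ := ρ) (TRel.ract x m)

theorem mQ_tmul (a v b) : mQ k G V R ρ (a ⊗ₜ (v ⊗ₜ b)) =
    gQ k G V R ρ a * (vQ k G V R ρ v * gQ k G V R ρ b) := by
  rw [vQ, LinearMap.comp_apply, mQ_gQ, gQ_mQ]
  simp [jV, lactM, ractM]

theorem vQ_skew (g : G) (v : V) :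
    gQ k G V R ρ (MonoidAlgebra.of k G g) * vQ k G V R ρ v =
    vQ k G V R ρ (ρ g v) * gQ k G V R ρ (MonoidAlgebra.of k G g) := by
  have h := toQT_eq (R := R) (ρ := ρ) (TRel.skew g v)
  change mQ k G V R ρ _ = mQ k G V R ρ _ at h
  rw [mQ_tmul, mQ_tmul, gQ_one, one_mul, mul_one] at h
  exact h

theorem quadQ (r : R) : LinearMap.mul' k _ (TensorProduct.map (vQ k G V R ρ) (vQ k G V R ρ)
    (r : V ⊗[k] V)) = 0 := by
  have h := toQT_eq (R := R) (ρ := ρ) (TRel.quad r)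
  rw [map_zero] at h
  rw [← h]
  generalize (r : V ⊗[k] V) = t
  induction t with
  | zero => simp
  | add x y hx hy => simp only [map_add, hx, hy]
  | tmul x y => simp [mul2VV, vQ, mQ]

theorem gA_one : gA k G V R ρ 1 = 1 := by
  simpa [gA] using toH_eq (R := R) (ρ := ρ) GRel.unit

theorem gA_mul (x y) : gA k G V R ρ x * gA k G V R ρ y = gA k G V R ρ (x * y) := by
  simpa [gA] using toH_eq (R := R) (ρ := ρ) (GRel.gmul x y)

theorem vA_skew (g : G) (v : V) :
    gA k G V R ρ (MonoidAlgebra.of k G g) * vA k G V R ρ v =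
    vA k G V R ρ (ρ g v) * gA k G V R ρ (MonoidAlgebra.of k G g) := by
  simpa [gA, vA] using toH_eq (R := R) (ρ := ρ) (GRel.act g v)

theorem quadA (r : R) : LinearMap.mul' k _ (TensorProduct.map (vA k G V R ρ) (vA k G V R ρ)
    (r : V ⊗[k] V)) = 0 := by
  have h := toH_eq (R := R) (ρ := ρ) (GRel.quad r)
  simp only [LinearMap.zero_apply, map_zero, add_zero] at h
  rw [← h]
  generalize (r : V ⊗[k] V) = t
  induction t with
  | zero => simp
  | add x y hx hy => simp only [map_add, hx, hy]
  | tmul x y => simp [mulVV, vA]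

def fwd0 : FreeAlg k G V →ₐ[k] QT k G V R ρ :=
  TensorAlgebra.lift k ((gQ k G V R ρ).coprod (vQ k G V R ρ))

@[simp] theorem fwd0_g (x) : fwd0 k G V R ρ (gIn k G V x) = gQ k G V R ρ x := by
  simp [fwd0, gIn]
@[simp] theorem fwd0_v (x) : fwd0 k G V R ρ (vIn k G V x) = vQ k G V R ρ x := by
  simp [fwd0, vIn]

def fwd : SkewA k G V R ρ →ₐ[k] QT k G V R ρ :=
  RingQuot.liftAlgHom k ⟨fwd0 k G V R ρ, by
    intro a b h
    cases h with
    | unit => simp [gQ_one]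
    | gmul x y => simp [gQ_mul]
    | act g v =>
      simp only [map_mul, map_add, fwd0_g, fwd0_v, LinearMap.zero_apply, map_zero, add_zero]
      exact vQ_skew k G V R ρ g v
    | quad r =>
      simp only [LinearMap.zero_apply, map_zero, add_zero]
      rw [← quadQ k G V R ρ r]
      generalize (r : V ⊗[k] V) = t
      induction t with
      | zero => simp
      | add x y hx hy => simp only [map_add, hx, hy]
      | tmul x y => simp [mulVV]⟩

theorem fwd_toH (x) : fwd k G V R ρ (toH k G V R ρ 0 0 0 x) = fwd0 k G V R ρ x := by
  simp [fwd, toH]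

def mA : MM k G V →ₗ[k] SkewA k G V R ρ :=
  (LinearMap.mul' k _).comp (TensorProduct.map (gA k G V R ρ) (embVGA k G V R ρ))

theorem mA_tmul (a v b) : mA k G V R ρ (a ⊗ₜ (v ⊗ₜ b)) =
    gA k G V R ρ a * (vA k G V R ρ v * gA k G V R ρ b) := by
  simp [mA, embVGA]

theorem MM_ind {p : MM k G V → Prop} (h0 : p 0) (ha : ∀ x y, p x → p y → p (x + y))
    (ht : ∀ a v b, p (a ⊗ₜ (v ⊗ₜ b))) (m : MM k G V) : p m := by
  induction m using TensorProduct.induction_on with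
  | zero => exact h0
  | add x y hx hy => exact ha x y hx hy
  | tmul a t =>
    induction t with
    | zero => simpa using h0
    | add x y hx hy => rw [TensorProduct.tmul_add]; exact ha _ _ hx hy
    | tmul v b => exact ht a v b

def bwd0 : Free2 k G V →ₐ[k] SkewA k G V R ρ :=
  TensorAlgebra.lift k ((gA k G V R ρ).coprod (mA k G V R ρ))

@[simp] theorem bwd0_g (x) : bwd0 k G V R ρ (gIn2 k G V x) = gA k G V R ρ x := by
  simp [bwd0, gIn2]
@[simp] theorem bwd0_m (x) : bwd0 k G V R ρ (mIn2 k G V x) = mA k G V R ρ x := by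
  simp [bwd0, mIn2]

theorem mA_jV (v) : mA k G V R ρ (jV k G V v) = vA k G V R ρ v := by
  change mA k G V R ρ (1 ⊗ₜ (v ⊗ₜ 1)) = _
  rw [mA_tmul, gA_one, one_mul, mul_one]

def bwd : QT k G V R ρ →ₐ[k] SkewA k G V R ρ :=
  RingQuot.liftAlgHom k ⟨bwd0 k G V R ρ, by
    intro a b h
    cases h with
    | unit => simp [gA_one]
    | gmul x y => simp [gA_mul]
    | lact x m =>
      simp only [map_mul, bwd0_g, bwd0_m]
      induction m using MM_ind with
      | h0 => simp
      | ha x y hx hy => simp only [map_add, mul_add, hx, hy]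
      | ht a v b =>
        simp only [lactM, TensorProduct.map_tmul, LinearMap.mulLeft_apply, LinearMap.id_apply,
          mA_tmul, ← gA_mul, mul_assoc]
    | ract x m =>
      simp only [map_mul, bwd0_g, bwd0_m]
      induction m using MM_ind with
      | h0 => simp
      | ha x y hx hy => simp only [map_add, add_mul, hx, hy]
      | ht a v b =>
        simp only [ractM, TensorProduct.map_tmul, LinearMap.mulRight_apply, LinearMap.id_apply,
          mA_tmul, ← gA_mul, mul_assoc]
    | quad r =>
      rw [map_zero, ← quadA k G V R ρ r]
      generalize (r : V ⊗[k] V) = t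
      induction t with
      | zero => simp
      | add x y hx hy => simp only [map_add, hx, hy]
      | tmul x y => simp [mul2VV, mA_jV]
    | skew g v =>
      rw [bwd0_m, bwd0_m, mA_tmul, mA_tmul, gA_one, one_mul, mul_one]
      exact vA_skew k G V R ρ g v⟩

theorem bwd_toQT (x) : bwd k G V R ρ (toQT k G V R ρ x) = bwd0 k G V R ρ x := by
  simp [bwd, toQT]

theorem bwd_gQ (x) : bwd k G V R ρ (gQ k G V R ρ x) = gA k G V R ρ x := by
  simp [gQ, bwd_toQT]
theorem bwd_mQ (x) : bwd k G V R ρ (mQ k G V R ρ x) = mA k G V R ρ x := by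
  simp [mQ, bwd_toQT]
theorem bwd_vQ (x) : bwd k G V R ρ (vQ k G V R ρ x) = vA k G V R ρ x := by
  rw [vQ, LinearMap.comp_apply, bwd_mQ, mA_jV]
theorem fwd_gA (x) : fwd k G V R ρ (gA k G V R ρ x) = gQ k G V R ρ x := by
  simp [gA, fwd_toH]
theorem fwd_vA (x) : fwd k G V R ρ (vA k G V R ρ x) = vQ k G V R ρ x := by
  simp [vA, fwd_toH]
theorem fwd_mA (m) : fwd k G V R ρ (mA k G V R ρ m) = mQ k G V R ρ m := by
  induction m using MM_ind with
  | h0 => simp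
  | ha x y hx hy => simp only [map_add, hx, hy]
  | ht a v b => simp only [mA_tmul, mQ_tmul, map_mul, fwd_gA, fwd_vA]

def theEquiv : SkewA k G V R ρ ≃ₐ[k] QT k G V R ρ :=
  AlgEquiv.ofAlgHom (fwd k G V R ρ) (bwd k G V R ρ)
    (by
      apply RingQuot.ringQuot_ext'
      apply TensorAlgebra.hom_ext
      apply LinearMap.prod_ext
      · apply LinearMap.ext
        intro x
        exact (congrArg _ (bwd_gQ k G V R ρ _)).trans (fwd_gA k G V R ρ _)
      · apply LinearMap.ext
        intro x
        exact (congrArg _ (bwd_mQ k G V R ρ _)).trans (fwd_mA k G V R ρ _))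
    (by
      apply RingQuot.ringQuot_ext'
      apply TensorAlgebra.hom_ext
      apply LinearMap.prod_ext
      · apply LinearMap.ext
        intro x
        exact (congrArg _ (fwd_gA k G V R ρ _)).trans (bwd_gQ k G V R ρ _)
      · apply LinearMap.ext
        intro x
        exact (congrArg _ (fwd_vA k G V R ρ _)).trans (bwd_vQ k G V R ρ _))

theorem grQT_zero : grQT k G V R ρ 0 =
    Subalgebra.toSubmodule (Algebra.adjoin k (Set.range (gQ k G V R ρ))) := by
  rw [grQT, grT2, ← Subalgebra.map_toSubmodule]
  rw [AlgHom.map_adjoin, ← Set.range_comp]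
  rfl

theorem grQT_succ (n : ℕ) : grQT k G V R ρ (n+1) =
    grQT k G V R ρ n * (LinearMap.range (mQ k G V R ρ) * grQT k G V R ρ 0) := by
  simp only [grQT, mQ, LinearMap.range_comp]
  rw [← Submodule.map_mul, ← Submodule.map_mul, ← grT2]

theorem eA_eq (d : ℕ) : Submodule.map
    ((theEquiv k G V R ρ).toLinearEquiv : SkewA k G V R ρ →ₗ[k] QT k G V R ρ)
        (grA k G V R ρ d) = (grT k G V d).map (fwd0 k G V R ρ).toLinearMap := by
  rw [grA, ← Submodule.map_comp]
  congr 1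
  apply LinearMap.ext
  intro x
  exact fwd_toH k G V R ρ x

theorem grF_zero : (grT k G V 0).map (fwd0 k G V R ρ).toLinearMap =  grQT k G V R ρ 0 := by
  rw [grQT_zero, grT, ← Subalgebra.map_toSubmodule, AlgHom.map_adjoin, ← Set.range_comp]
  congr 3
  ext1 x
  simp

theorem grF_succ (n : ℕ) : (grT k G V (n+1)).map (fwd0 k G V R ρ).toLinearMap =
    (grT k G V n).map (fwd0 k G V R ρ).toLinearMap *
      (LinearMap.range (vQ k G V R ρ) * grQT k G V R ρ 0) := by
  rw [← grF_zero, show grT k G V (n+1) = grT k G V n * (LinearMap.range (vIn k G V) * grT k G V 0)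
    by rw [← grT], Submodule.map_mul, Submodule.map_mul, ← LinearMap.range_comp]
  congr 3
  apply LinearMap.ext
  intro x
  simp

theorem gr0_mul : grQT k G V R ρ 0 * grQT k G V R ρ 0 = grQT k G V R ρ 0 := by
  rw [grQT_zero]
  exact Subalgebra.isIdempotentElem_toSubmodule _

theorem grQT_mul (n : ℕ) : grQT k G V R ρ n * grQT k G V R ρ 0 = grQT k G V R ρ n := by
  cases n with
  | zero => exact gr0_mul k G V R ρ
  | succ n => rw [grQT_succ, mul_assoc, mul_assoc, gr0_mul]

theorem gQ_mem (x) : gQ k G V R ρ x ∈ grQT k G V R ρ 0 := by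
  rw [grQT_zero]
  exact Algebra.subset_adjoin ⟨x, rfl⟩

theorem range_mQ_le : LinearMap.range (mQ k G V R ρ) ≤
    grQT k G V R ρ 0 * (LinearMap.range (vQ k G V R ρ) * grQT k G V R ρ 0) := by
  rintro _ ⟨m, rfl⟩
  induction m using MM_ind with
  | h0 => simp
  | ha x y hx hy => rw [map_add]; exact add_mem hx hy
  | ht a v b =>
    rw [mQ_tmul]
    exact Submodule.mul_mem_mul (gQ_mem k G V R ρ a)
      (Submodule.mul_mem_mul ⟨v, rfl⟩ (gQ_mem k G V R ρ b))

theorem grF_eq (d : ℕ) : (grT k G V d).map (fwd0 k G V R ρ).toLinearMap = grQT k G V R ρ d := by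
  induction d with
  | zero => exact grF_zero k G V R ρ
  | succ n ih =>
    rw [grF_succ, ih]
    apply le_antisymm
    · rw [grQT_succ]
      refine mul_le_mul' le_rfl (mul_le_mul' ?_ le_rfl)
      exact LinearMap.range_comp_le_range _ _
    · rw [grQT_succ]
      refine (mul_le_mul' le_rfl (mul_le_mul' (range_mQ_le k G V R ρ) le_rfl)).trans ?_
      rw [mul_assoc, mul_assoc, gr0_mul, ← mul_assoc, grQT_mul]

end aux

end DeformKoszul

open DeformKoszul

/-- **Section 2** of Shepler–Witherspoon, "Deforming group actions on Koszul algebras":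
for a finite group `G` acting linearly on a finite dimensional vector space `V` and a
`G`-stable subspace `R ⊆ V ⊗ V`, the skew group algebra `S ⋊ G` (for `S = T(V)/(R)`,
presented as the algebra generated by `kG` and `V` subject to `R` and the relations
`g·v = (ᵍv)·g`) is isomorphic **as a graded algebra** to
`T_{kG}(kG ⊗ V ⊗ kG)/(R ∪ R')`, where elements of `G` have degree 0, elements of `V`
degree 1, and `R' = span_k{g ⊗ v ⊗ 1 − 1 ⊗ ᵍv ⊗ g : v ∈ V, g ∈ G} ⊆ kG ⊗ V ⊗ kG`,
with `R` identified with a subspace of `(kG ⊗ V ⊗ kG) ⊗_{kG} (kG ⊗ V ⊗ kG)` via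
`v ⊗ w ↦ (1⊗v⊗1) ⊗ (1⊗w⊗1)`. -/
theorem skew_group_algebra_iso_relative_tensor_algebra_presentation
    (k G V : Type) [Field k] [Group G] [Fintype G] [AddCommGroup V] [Module k V]
    [FiniteDimensional k V] (h2 : (2 : k) ≠ 0)
    (ρ : Representation k G V) (R : Submodule k (V ⊗[k] V))
    (hR : ∀ (g : G), ∀ x ∈ R, TensorProduct.map (ρ g) (ρ g) x ∈ R) :
    ∃ e : SkewA k G V R ρ ≃ₐ[k] QT k G V R ρ,
      ∀ d, Submodule.map (e.toLinearEquiv : SkewA k G V R ρ →ₗ[k] QT k G V R ρ)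
        (grA k G V R ρ d) = grQT k G V R ρ d := by
  exact ⟨theEquiv k G V R ρ, fun d => (eA_eq k G V R ρ d).trans (grF_eq k G V R ρ d)⟩
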